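/- arXiv:2501.18773 — 10 statements merged into one kernel-verified Lean document; each statement's English description precedes it below -/
import Mathlib

section
/- Fix t ≥ 1 and γ ∈ [0,1). If a_t := γ A_{t−1}/(1 − γ) (so that a_t/A_t = γ) and x_{t+1} := (1 − γ)x_t + γ v_t, then the primal-dual gap satisfies G_t ≤ (1 − γ)G_{t−1} − γ⟨∇f(x_t), v_t − x_t⟩ − f(x_t) + f((1 − γ)x_t + γ v_t). Moreover, the map γ ↦ (1 − γ)G_{t−1} − γ⟨∇f(x_t), v_t − x_t⟩ − f(x_t) + f((1 − γ)x_t + γ v_t) is convex on [0,1]. -/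
open scoped RealInnerProductSpace

/-- Iterates of a recursion that moves towards points of a convex set, with step
`a ℓ / A ℓ` for positive weights, stay in that set. -/
theorem Convex.weighted_average_iterate_mem {E : Type*} [AddCommGroup E] [Module ℝ E]
    {X : Set E} (hX : Convex ℝ X) {t : ℕ} {a A : ℕ → ℝ} (ha : ∀ ℓ < t, 0 < a ℓ)
    (hA : ∀ ℓ, A ℓ = ∑ i ∈ Finset.range (ℓ + 1), a i) {x v : ℕ → E} (hx0 : x 0 ∈ X)
    (hv : ∀ ℓ, v ℓ ∈ X)
    (hx : ∀ ℓ < t, x (ℓ + 1) = (1 - a ℓ / A ℓ) • x ℓ + (a ℓ / A ℓ) • v ℓ) :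
    ∀ ℓ ≤ t, x ℓ ∈ X := by
  intro ℓ
  induction ℓ with
  | zero => exact fun _ => hx0
  | succ ℓ ih =>
    intro hℓ
    have haℓ : 0 < a ℓ := ha ℓ hℓ
    have hle : a ℓ ≤ A ℓ := by
      rw [hA, Finset.sum_range_succ]
      have : 0 ≤ ∑ i ∈ Finset.range ℓ, a i :=
        Finset.sum_nonneg fun i hi => (ha i ((Finset.mem_range.mp hi).trans hℓ)).le
      linarith
    have hstep : a ℓ / A ℓ ≤ 1 := div_le_one_of_le₀ hle (haℓ.le.trans hle)
    rw [hx ℓ hℓ]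
    exact hX (ih (Nat.le_of_succ_le hℓ)) (hv ℓ) (sub_nonneg.mpr hstep)
      (div_nonneg haℓ.le (haℓ.le.trans hle)) (by ring)

/-- An affine function plus a convex function restricted to a segment is convex. -/
theorem ConvexOn.affine_add_segment {E : Type*} [AddCommGroup E] [Module ℝ E]
    {X : Set E} {f : E → ℝ} (hf : ConvexOn ℝ X f) {y z : E} (hy : y ∈ X) (hz : z ∈ X)
    (b c d : ℝ) :
    ConvexOn ℝ (Set.Icc (0 : ℝ) 1)
      (fun s : ℝ => (1 - s) * b - s * c - d + f ((1 - s) • y + s • z)) := by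
  refine ⟨convex_Icc 0 1, fun p hp q hq α β hα hβ hαβ => ?_⟩
  have hmem : ∀ s ∈ Set.Icc (0 : ℝ) 1, (1 - s) • y + s • z ∈ X := fun s hs =>
    hf.1 hy hz (sub_nonneg.mpr hs.2) hs.1 (by ring)
  have hconv := hf.2 (hmem p hp) (hmem q hq) hα hβ hαβ
  obtain rfl : β = 1 - α := by linarith
  have hpoint : (1 - (α * p + (1 - α) * q)) • y + (α * p + (1 - α) * q) • z =
      α • ((1 - p) • y + p • z) + (1 - α) • ((1 - q) • y + q • z) := by
    module
  simp only [smul_eq_mul] at hconv ⊢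
  rw [hpoint]
  linear_combination hconv

/-- Primal-dual gap bound for Frank-Wolfe with step `γ`, and convexity of the
line-search objective in `γ`. -/
theorem fw_primal_dual_gap_bound_and_convexity
    {E : Type*} [NormedAddCommGroup E] [InnerProductSpace ℝ E] [FiniteDimensional ℝ E]
    (X : Set E) (hXcompact : IsCompact X) (hXconv : Convex ℝ X)
    (U : Set E) (hUopen : IsOpen U) (hXU : X ⊆ U)
    (f : E → ℝ) (f' : E → E)
    (hfconv : ConvexOn ℝ X f)
    (hgrad : ∀ z ∈ U, HasGradientAt f (f' z) z)
    (t : ℕ) (ht : 1 ≤ t)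
    (a A : ℕ → ℝ) (hapos : ∀ ℓ < t, 0 < a ℓ)
    (hA : ∀ ℓ, A ℓ = ∑ i ∈ Finset.range (ℓ + 1), a i)
    (x v : ℕ → E) (hx0 : x 0 ∈ X)
    (hv : ∀ ℓ, v ℓ ∈ X ∧ ∀ w ∈ X, ⟪f' (x ℓ), v ℓ⟫ ≤ ⟪f' (x ℓ), w⟫)
    (hxrec : ∀ ℓ < t, x (ℓ + 1) = (1 - a ℓ / A ℓ) • x ℓ + (a ℓ / A ℓ) • v ℓ)
    (G : ℕ → ℝ)
    (hG : ∀ ℓ, G ℓ = f (x (ℓ + 1)) -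
      (1 / A ℓ) * ∑ i ∈ Finset.range (ℓ + 1), a i * (f (x i) + ⟪f' (x i), v i - x i⟫))
    (γ : ℝ) (hγ : γ ∈ Set.Ico (0 : ℝ) 1)
    (hat : a t = γ * A (t - 1) / (1 - γ))
    (hxt1 : x (t + 1) = (1 - γ) • x t + γ • v t) :
    (G t ≤ (1 - γ) * G (t - 1) - γ * ⟪f' (x t), v t - x t⟫ - f (x t)
        + f ((1 - γ) • x t + γ • v t)) ∧
      ConvexOn ℝ (Set.Icc (0 : ℝ) 1) (fun γ' : ℝ =>
        (1 - γ') * G (t - 1) - γ' * ⟪f' (x t), v t - x t⟫ - f (x t)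
          + f ((1 - γ') • x t + γ' • v t)) := by
  have hxt : x t ∈ X :=
    hXconv.weighted_average_iterate_mem hapos hA hx0 (fun ℓ => (hv ℓ).1) hxrec t le_rfl
  refine ⟨le_of_eq ?_, hfconv.affine_add_segment hxt (hv t).1 _ _ _⟩
  obtain ⟨n, rfl⟩ : ∃ n, t = n + 1 := ⟨t - 1, by omega⟩
  simp only [Nat.add_sub_cancel] at hat ⊢
  have hApos : 0 < A n := by
    rw [hA]
    exact Finset.sum_pos (fun i hi => hapos i (Finset.mem_range.mp hi)) ⟨0, by simp⟩
  have hγ1 : 1 - γ ≠ 0 := (sub_pos.mpr hγ.2).ne'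
  have hAt : A (n + 1) = A n / (1 - γ) := by
    rw [hA, Finset.sum_range_succ, ← hA, hat]
    field_simp
    ring
  rw [hG (n + 1), hG n, Finset.sum_range_succ, hAt, hat, hxt1]
  field_simp
  ring
end

section
/- Let L > 0 and D > 0, and let (G_t)_{t≥0} be a sequence of nonnegative reals with G_0 ≤ LD²/2 and, for all t ≥ 1, G_t ≤ (1 − (1/2)min{1, G_{t−1}/(LD²)}) G_{t−1}. Then G_t ≤ 4LD²/(t+2) for all t ≥ 0. -/
/-- A real sequence with `a 0 ≤ 1 / 2` and contraction factor `1 - min 1 (a t) / 2`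
decays at rate `2 / (t + 4)`. -/
theorem le_two_div_of_contraction (a : ℕ → ℝ) (h0 : a 0 ≤ 1 / 2)
    (hrec : ∀ t, a (t + 1) ≤ (1 - 1 / 2 * min 1 (a t)) * a t) (t : ℕ) :
    a t ≤ 2 / (t + 4) := by
  induction t with
  | zero => norm_num at h0 ⊢; exact h0
  | succ t ih =>
    have hn : (0 : ℝ) ≤ t := t.cast_nonneg
    have hle : (2 : ℝ) / (t + 4) ≤ 1 := by rw [div_le_one (by positivity)]; linarith
    have hstep := hrec t
    rw [min_eq_right (ih.trans hle)] at hstep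
    have hmono : (1 - 1 / 2 * a t) * a t ≤ (1 - 1 / 2 * (2 / (t + 4))) * (2 / (t + 4)) := by
      nlinarith [mul_nonneg (sub_nonneg.2 ih) (by linarith : 0 ≤ 1 - (a t + 2 / (t + 4)) / 2)]
    have hrate : (1 - 1 / 2 * (2 / ((t : ℝ) + 4))) * (2 / (t + 4)) ≤ 2 / (t + 1 + 4) := by
      have heq : (1 - 1 / 2 * (2 / ((t : ℝ) + 4))) * (2 / (t + 4))
          = 2 * (t + 3) / (t + 4) ^ 2 := by
        field_simp
        ring
      rw [heq, div_le_div_iff₀ (by positivity) (by positivity)]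
      nlinarith
    push_cast
    exact hstep.trans (hmono.trans hrate)

/-- Contraction-to-rate conversion for the primal-dual short step:
a nonnegative sequence satisfying the short-step contraction converges at rate
`4LD²/(t+2)`. -/
theorem pd_short_step_rate (L D : ℝ) (hL : 0 < L) (hD : 0 < D)
    (G : ℕ → ℝ) (hGnonneg : ∀ t, 0 ≤ G t)
    (hG0 : G 0 ≤ L * D ^ 2 / 2)
    (hrec : ∀ t, 1 ≤ t →
      G t ≤ (1 - (1 / 2) * min 1 (G (t - 1) / (L * D ^ 2))) * G (t - 1)) :
    ∀ t : ℕ, G t ≤ 4 * L * D ^ 2 / (t + 2) := by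
  intro t
  have hC : 0 < L * D ^ 2 := by positivity
  have hbound : G t / (L * D ^ 2) ≤ 2 / (t + 4) := by
    refine le_two_div_of_contraction (fun s => G s / (L * D ^ 2))
      ?_ (fun s => ?_) t
    · rw [div_le_iff₀ hC]
      linarith
    · rw [← mul_div_assoc]
      exact div_le_div_of_nonneg_right (hrec (s + 1) (by omega)) hC.le
  have hrate : (2 : ℝ) / (t + 4) ≤ 4 / (t + 2) := by
    gcongr <;> norm_num
  calc G t ≤ 4 / (t + 2) * (L * D ^ 2) := (div_le_iff₀ hC).1 (hbound.trans hrate)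
    _ = 4 * L * D ^ 2 / (t + 2) := by ring
end

section
/- Let L > 0, c > 0, 𝒢 ≥ 0, and A ≥ 0. Define φ : (0, ∞) → ℝ by φ(a) := 𝒢/(A + a) + c(−aA/(A + a) + a²L/2 − a²/(2(A + a))). Then φ is convex on (0, ∞), its derivative at a = 1/(2L) is nonpositive, and consequently every minimizer a* of φ over (0, ∞) satisfies a* ≥ 1/(2L). -/
/-- The derivative of the primal-dual gap model at a positive step. -/
theorem hasDerivAt_pd_gap_model (L c Gp : ℝ) {A a : ℝ} (hA : 0 ≤ A) (ha : 0 < a) :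
    HasDerivAt
      (fun a : ℝ => Gp / (A + a) +
        c * (-(a * A) / (A + a) + a ^ 2 * L / 2 - a ^ 2 / (2 * (A + a))))
      (c * (L * a - 1 / 2) - (Gp + c * A ^ 2 / 2) / (A + a) ^ 2) a := by
  have hne : A + a ≠ 0 := by positivity
  have hid := hasDerivAt_id' a
  have hden : HasDerivAt (fun a : ℝ => A + a) 1 a := hid.const_add A
  have hsq : HasDerivAt (fun a : ℝ => a ^ 2) (2 * a) a := by simpa using hasDerivAt_pow 2 a
  refine (((hasDerivAt_const a Gp).fun_div hden hne).fun_add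
    (((((hid.mul_const A).fun_neg.fun_div hden hne).fun_add
      ((hsq.mul_const L).div_const 2)).fun_sub
        (hsq.fun_div (hden.const_mul 2) (by positivity))).const_mul c)).congr_deriv ?_
  field_simp
  ring

/-- Properties of the per-iteration primal-dual gap model for gradient descent:
`φ` is convex on `(0,∞)`, its derivative at `1/(2L)` is nonpositive, and hence
every minimizer of `φ` over `(0,∞)` is at least `1/(2L)`. -/
theorem gd_pd_short_step_model_properties
    (L c Gp A : ℝ) (hL : 0 < L) (hc : 0 < c) (hGp : 0 ≤ Gp) (hA : 0 ≤ A)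
    (φ : ℝ → ℝ)
    (hφ : ∀ a : ℝ, φ a =
      Gp / (A + a) + c * (-(a * A) / (A + a) + a ^ 2 * L / 2 - a ^ 2 / (2 * (A + a)))) :
    ConvexOn ℝ (Set.Ioi (0 : ℝ)) φ ∧
      deriv φ (1 / (2 * L)) ≤ 0 ∧
      ∀ astar ∈ Set.Ioi (0 : ℝ), (∀ b ∈ Set.Ioi (0 : ℝ), φ astar ≤ φ b) →
        1 / (2 * L) ≤ astar := by
  have hderiv : ∀ a : ℝ, 0 < a →
      HasDerivAt φ (c * (L * a - 1 / 2) - (Gp + c * A ^ 2 / 2) / (A + a) ^ 2) a := by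
    rw [funext hφ]
    exact fun a ha => hasDerivAt_pd_gap_model L c Gp hA ha
  refine ⟨?_, ?_, ?_⟩
  · refine MonotoneOn.convexOn_of_deriv (convex_Ioi 0)
      (fun a ha => (hderiv a ha).continuousAt.continuousWithinAt) ?_ ?_
    · rw [interior_Ioi]
      exact fun a ha => (hderiv a ha).differentiableAt.differentiableWithinAt
    · rw [interior_Ioi]
      intro a ha b hb hab
      rw [Set.mem_Ioi] at ha hb
      rw [(hderiv a ha).deriv, (hderiv b hb).deriv]
      gcongr
  · have hpos : 0 < 1 / (2 * L) := by positivity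
    have hlin : L * (1 / (2 * L)) - 1 / 2 = 0 := by field_simp; ring
    rw [(hderiv _ hpos).deriv, hlin, mul_zero, zero_sub, neg_nonpos]
    positivity
  · intro a ha hmin
    have hloc : IsLocalMin φ a := Filter.eventually_of_mem (Ioi_mem_nhds ha) hmin
    have hzero := hloc.hasDerivAt_eq_zero (hderiv a ha)
    have hquot : 0 ≤ (Gp + c * A ^ 2 / 2) / (A + a) ^ 2 := by positivity
    have hlin : 0 ≤ L * a - 1 / 2 := nonneg_of_mul_nonneg_right (by linarith) hc
    rw [div_le_iff₀ (by positivity)]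
    linarith
end

section
/- For every t ≥ 1 and every a_t > 0, the primal-dual gap of gradient descent satisfies G_t ≤ 𝒢_{t−1}/A_t + (a_t²/(2A_t))‖∇f(x_t)‖² + f(x_{t+1}) − f(x_t). Moreover, for any 𝒢 ≥ 0, A ≥ 0, x ∈ ℝ^d, and g ∈ ℝ^d, the right-hand side as a function of the step, a ↦ 𝒢/(A + a) + (a²/(2(A + a)))‖g‖² + f(x − a g) − f(x), is convex on (0, ∞). -/
open scoped RealInnerProductSpace

section

variable {E : Type*} [NormedAddCommGroup E] [InnerProductSpace ℝ E]

/-- The partial sums of linearizations plus the quadratic regularizer are minimized at the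
gradient descent iterate, with exact quadratic growth. -/
lemma sum_linearization_add_half_sq_eq (c a : ℕ → ℝ) (g x : ℕ → E)
    (hx : ∀ t, 1 ≤ t → x (t + 1) = x t - a t • g t) (n : ℕ) (u : E) :
    (∑ i ∈ Finset.Icc 1 n, a i * (c i + ⟪g i, u - x i⟫)) + 1 / 2 * ‖u - x 1‖ ^ 2 =
      (∑ i ∈ Finset.Icc 1 n, a i * (c i + ⟪g i, x (n + 1) - x i⟫))
        + 1 / 2 * ‖x (n + 1) - x 1‖ ^ 2 + 1 / 2 * ‖u - x (n + 1)‖ ^ 2 := by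
  induction n generalizing u with
  | zero => simp
  | succ n ih =>
    have hu := ih u
    have hw := ih (x (n + 1 + 1))
    have hxn := hx (n + 1) (by omega)
    have hstep : x (n + 1 + 1) - x (n + 1) = -(a (n + 1) • g (n + 1)) := by rw [hxn]; abel
    have hdiff : u - x (n + 1 + 1) = (u - x (n + 1)) + a (n + 1) • g (n + 1) := by
      rw [hxn]; abel
    have hnorm : ‖u - x (n + 1 + 1)‖ ^ 2 = ‖u - x (n + 1)‖ ^ 2
        + 2 * (a (n + 1) * ⟪g (n + 1), u - x (n + 1)⟫) + a (n + 1) ^ 2 * ‖g (n + 1)‖ ^ 2 := by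
      rw [hdiff, norm_add_sq_real, real_inner_smul_right, real_inner_comm, norm_smul, mul_pow,
        Real.norm_eq_abs, sq_abs]
    have hstep_sq : ‖x (n + 1 + 1) - x (n + 1)‖ ^ 2 = a (n + 1) ^ 2 * ‖g (n + 1)‖ ^ 2 := by
      rw [hstep, norm_neg, norm_smul, mul_pow, Real.norm_eq_abs, sq_abs]
    have hinner : ⟪g (n + 1), x (n + 1 + 1) - x (n + 1)⟫ = -(a (n + 1) * ‖g (n + 1)‖ ^ 2) := by
      rw [hstep, inner_neg_right, real_inner_smul_right, real_inner_self_eq_norm_sq]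
    rw [hstep_sq] at hw
    rw [Finset.sum_Icc_succ_top (by omega), Finset.sum_Icc_succ_top (by omega), hnorm, hinner]
    linear_combination hu - hw

/-- A function lying above all its linearizations is convex. -/
lemma convexOn_univ_of_linearization_le (f : E → ℝ) (f' : E → E)
    (h : ∀ x y, 0 ≤ f y - f x - ⟪f' x, y - x⟫) : ConvexOn ℝ Set.univ f := by
  refine ⟨convex_univ, fun x _ y _ s t hs ht hst => ?_⟩
  set w := s • x + t • y with hw
  have hzero : s * ⟪f' w, x - w⟫ + t * ⟪f' w, y - w⟫ = 0 := by
    rw [← real_inner_smul_right, ← real_inner_smul_right, ← inner_add_right]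
    have : s • (x - w) + t • (y - w) = w - (s + t) • w := by
      rw [hw]; module
    rw [this, hst, one_smul, sub_self, inner_zero_right]
  have hx := mul_nonneg hs (h w x)
  have hy := mul_nonneg ht (h w y)
  have hfw : (s + t) * f w = f w := by rw [hst, one_mul]
  simp only [smul_eq_mul]
  linarith

end

/-- The step-size part of the gap bound is a nonnegative multiple of a shifted inverse plus an
affine function, hence convex. -/
lemma convexOn_div_add_sq_div (P A c : ℝ) (hP : 0 ≤ P) (hA : 0 ≤ A) (hc : 0 ≤ c) :
    ConvexOn ℝ (Set.Ioi (0 : ℝ)) (fun b : ℝ => P / (A + b) + b ^ 2 / (2 * (A + b)) * c) := by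
  have hinv : ConvexOn ℝ (Set.Ioi (0 : ℝ)) (fun b : ℝ => (A + b)⁻¹) := by
    have h := (convexOn_zpow (𝕜 := ℝ) (-1)).translate_right A
    simp only [zpow_neg_one] at h
    refine h.subset (fun b hb => ?_) (convex_Ioi 0)
    have : 0 < b := hb
    simp only [Set.mem_preimage, Set.mem_Ioi]
    positivity
  have hlin : ConvexOn ℝ (Set.Ioi (0 : ℝ)) (fun b : ℝ => c / 2 * b - c / 2 * A) := by
    refine ⟨convex_Ioi 0, fun x _ y _ s t _ _ hst => le_of_eq ?_⟩
    simp only [smul_eq_mul]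
    linear_combination c / 2 * A * hst
  refine ((hinv.smul (c := P + c / 2 * A ^ 2) (by positivity)).add hlin).congr fun b hb => ?_
  have hpos : 0 < A + b := add_pos_of_nonneg_of_pos hA hb
  simp only [Pi.add_apply, smul_eq_mul]
  field_simp
  ring

/-- Per-iteration primal-dual gap bound for gradient descent, and convexity of the
line-search objective in the step size. -/
theorem gd_pd_gap_bound_and_convexity
    {d : ℕ}
    (f : EuclideanSpace ℝ (Fin d) → ℝ) (f' : EuclideanSpace ℝ (Fin d) → EuclideanSpace ℝ (Fin d))
    (hgrad : ∀ z, HasGradientAt f (f' z) z)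
    (hconv : ∀ x y : EuclideanSpace ℝ (Fin d), 0 ≤ f y - f x - ⟪f' x, y - x⟫)
    (xs : EuclideanSpace ℝ (Fin d)) (hxs : ∀ z, f xs ≤ f z)
    (x : ℕ → EuclideanSpace ℝ (Fin d))
    (D : ℝ) (hD : ‖x 1 - xs‖ ≤ D)
    (a A : ℕ → ℝ) (hapos : ∀ t, 1 ≤ t → 0 < a t)
    (hA : ∀ t, A t = ∑ i ∈ Finset.Icc 1 t, a i)
    (hxrec : ∀ t, 1 ≤ t → x (t + 1) = x t - a t • f' (x t))
    (G Gc : ℕ → ℝ)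
    (hG : ∀ t, 1 ≤ t → G t = f (x (t + 1)) - (1 / A t) *
      ((∑ i ∈ Finset.Icc 1 t, a i * (f (x i) + ⟪f' (x i), x (t + 1) - x i⟫))
        + 1 / 2 * ‖x (t + 1) - x 1‖ ^ 2 - 1 / 2 * D ^ 2))
    (hGc0 : Gc 0 = 1 / 2 * D ^ 2)
    (hGc : ∀ t, 1 ≤ t → Gc t = A t * G t) :
    (∀ t : ℕ, 1 ≤ t →
      G t ≤ Gc (t - 1) / A t + a t ^ 2 / (2 * A t) * ‖f' (x t)‖ ^ 2
        + f (x (t + 1)) - f (x t)) ∧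
    (∀ (Gp A' : ℝ), 0 ≤ Gp → 0 ≤ A' →
      ∀ (z g : EuclideanSpace ℝ (Fin d)),
        ConvexOn ℝ (Set.Ioi (0 : ℝ)) (fun b : ℝ =>
          Gp / (A' + b) + b ^ 2 / (2 * (A' + b)) * ‖g‖ ^ 2 + f (z - b • g) - f z)) := by
  have hconvex := convexOn_univ_of_linearization_le f f' hconv
  refine ⟨fun t ht => ?_, fun Gp A' hGp hA' z g => ?_⟩
  · obtain ⟨n, rfl⟩ : ∃ n, t = n + 1 := ⟨t - 1, by omega⟩
    have hApos : ∀ m, 1 ≤ m → 0 < A m := fun m hm => by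
      rw [hA]
      exact Finset.sum_pos (fun i hi => hapos i (Finset.mem_Icc.mp hi).1)
        ⟨1, Finset.mem_Icc.mpr ⟨le_rfl, hm⟩⟩
    have hAn := hApos (n + 1) ht
    have hAsucc : A (n + 1) = A n + a (n + 1) := by
      rw [hA, hA, Finset.sum_Icc_succ_top (by omega)]
    have hGcn : Gc n = A n * f (x (n + 1)) -
        ((∑ i ∈ Finset.Icc 1 n, a i * (f (x i) + ⟪f' (x i), x (n + 1) - x i⟫))
          + 1 / 2 * ‖x (n + 1) - x 1‖ ^ 2 - 1 / 2 * D ^ 2) := by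
      rcases Nat.eq_zero_or_pos n with rfl | hn
      · simp [hGc0, hA]
      · have := hApos n hn
        rw [hGc n hn, hG n hn]
        field_simp
    have hmin := sum_linearization_add_half_sq_eq (fun i => f (x i)) a (fun i => f' (x i)) x
      hxrec n (x (n + 1 + 1))
    have hstep : x (n + 1 + 1) - x (n + 1) = -(a (n + 1) • f' (x (n + 1))) := by
      rw [hxrec (n + 1) ht]; abel
    have hstep_sq : ‖x (n + 1 + 1) - x (n + 1)‖ ^ 2
        = a (n + 1) ^ 2 * ‖f' (x (n + 1))‖ ^ 2 := by
      rw [hstep, norm_neg, norm_smul, mul_pow, Real.norm_eq_abs, sq_abs]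
    have hinner : ⟪f' (x (n + 1)), x (n + 1 + 1) - x (n + 1)⟫
        = -(a (n + 1) * ‖f' (x (n + 1))‖ ^ 2) := by
      rw [hstep, inner_neg_right, real_inner_smul_right, real_inner_self_eq_norm_sq]
    rw [hstep_sq] at hmin
    rw [hG (n + 1) ht, Nat.add_sub_cancel, hGcn, Finset.sum_Icc_succ_top (by omega), hinner]
    refine le_of_eq ?_
    field_simp
    rw [hAsucc]
    linear_combination -2 * hmin
  · have hline : ConvexOn ℝ (Set.Ioi (0 : ℝ)) (fun b : ℝ => f (z - b • g)) := by
      refine ⟨convex_Ioi 0, fun b _ b' _ s t hs ht hst => ?_⟩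
      have h := hconvex.2 (Set.mem_univ (z - b • g)) (Set.mem_univ (z - b' • g)) hs ht hst
      have hcomb : s • (z - b • g) + t • (z - b' • g) = z - (s • b + t • b') • g := by
        obtain rfl : t = 1 - s := by linarith
        simp only [smul_eq_mul]
        module
      rwa [hcomb] at h
    have hsum := (convexOn_div_add_sq_div Gp A' (‖g‖ ^ 2) hGp hA' (sq_nonneg _)).add hline
    exact (hsum.add_const (-f z)).congr fun b _ => by simp [sub_eq_add_neg]
end

section
/- If the regularizer is time-invariant, ψ_t = ψ for all t, then for every u ∈ X and every choice of subgradients g_t ∈ ∂ℓ_t(z_t), the optimistic FTRL iterates satisfy Σ_{t=1}^T (ℓ_t(z_t) − ℓ_t(u)) ≤ ψ(u) − inf_{z∈X} ψ(z) + Σ_{t=1}^T ⟨g_t − g̃_t, z_t − z_{t+1}⟩. -/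
open scoped RealInnerProductSpace

/-- Telescoped form of the optimistic FTRL analysis: only the comparison of each iterate with its
successor is used. -/
theorem optimistic_ftrl_telescope
    {E : Type*} [NormedAddCommGroup E] [InnerProductSpace ℝ E]
    (n : ℕ) (l : ℕ → E → ℝ) (ψ : E → ℝ) (gh z g : ℕ → E)
    (hz : ∀ t ∈ Finset.Icc 1 n,
      (∑ i ∈ Finset.Icc 1 (t - 1), l i (z t)) + ⟪gh t, z t⟫ + ψ (z t)
        ≤ (∑ i ∈ Finset.Icc 1 (t - 1), l i (z (t + 1))) + ⟪gh t, z (t + 1)⟫ + ψ (z (t + 1)))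
    (hg : ∀ t ∈ Finset.Icc 1 n, l t (z t) + ⟪g t, z (t + 1) - z t⟫ ≤ l t (z (t + 1))) :
    ∑ t ∈ Finset.Icc 1 n, l t (z t) + ψ (z 1)
      ≤ ∑ t ∈ Finset.Icc 1 n, l t (z (n + 1)) + ψ (z (n + 1))
        + ∑ t ∈ Finset.Icc 1 n, ⟪g t - gh t, z t - z (t + 1)⟫ := by
  induction n with
  | zero => simp
  | succ n ih =>
    have hsub : Finset.Icc 1 n ⊆ Finset.Icc 1 (n + 1) :=
      Finset.Icc_subset_Icc_right n.le_succ
    have hmem : n + 1 ∈ Finset.Icc 1 (n + 1) := by simp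
    have ih := ih (fun t ht => hz t (hsub ht)) (fun t ht => hg t (hsub ht))
    have hmin := hz (n + 1) hmem
    have hlin := hg (n + 1) hmem
    rw [Nat.add_sub_cancel] at hmin
    simp only [Finset.sum_Icc_succ_top (Nat.le_add_left 1 n), inner_sub_left, inner_sub_right]
      at ih hlin ⊢
    linarith

/-- Regret bound for optimistic FTRL with a time-invariant regularizer. -/
theorem optimistic_ftrl_regret_time_invariant
    {E : Type*} [NormedAddCommGroup E] [InnerProductSpace ℝ E] [FiniteDimensional ℝ E]
    (X : Set E) (hXclosed : IsClosed X) (hXconv : Convex ℝ X) (hXne : X.Nonempty)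
    (T : ℕ)
    (l : ℕ → E → ℝ) (ψ : E → ℝ)
    (hlconv : ∀ t, ConvexOn ℝ X (l t)) (hψconv : ConvexOn ℝ X ψ)
    (hψbdd : BddBelow (ψ '' X))
    (gh : ℕ → E)  -- the hints g̃_t
    (z : ℕ → E) (u : E) (hu : u ∈ X)
    (hz : ∀ t ∈ Finset.Icc 1 T, z t ∈ X ∧ ∀ w ∈ X,
      (∑ i ∈ Finset.Icc 1 (t - 1), l i (z t)) + ⟪gh t, z t⟫ + ψ (z t)
        ≤ (∑ i ∈ Finset.Icc 1 (t - 1), l i w) + ⟪gh t, w⟫ + ψ w)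
    (hzT1 : z (T + 1) = u)
    (g : ℕ → E)
    (hgsub : ∀ t ∈ Finset.Icc 1 T, ∀ w ∈ X, l t (z t) + ⟪g t, w - z t⟫ ≤ l t w) :
    ∑ t ∈ Finset.Icc 1 T, (l t (z t) - l t u)
      ≤ ψ u - sInf (ψ '' X) + ∑ t ∈ Finset.Icc 1 T, ⟪g t - gh t, z t - z (t + 1)⟫ := by
  have hnext : ∀ t ∈ Finset.Icc 1 T, z (t + 1) ∈ X := by
    intro t ht
    obtain ⟨-, htT⟩ := Finset.mem_Icc.mp ht
    rcases htT.eq_or_lt with rfl | hlt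
    · rwa [hzT1]
    · exact (hz (t + 1) (Finset.mem_Icc.mpr ⟨Nat.le_add_left 1 t, hlt⟩)).1
  have hfirst : z 1 ∈ X := by
    rcases T.eq_zero_or_pos with rfl | hT
    · simpa [hzT1] using hu
    · exact (hz 1 (Finset.mem_Icc.mpr ⟨le_rfl, hT⟩)).1
  have htel := optimistic_ftrl_telescope T l ψ gh z g
    (fun t ht => (hz t ht).2 _ (hnext t ht)) (fun t ht => hgsub t ht _ (hnext t ht))
  have hinf : sInf (ψ '' X) ≤ ψ (z 1) := csInf_le hψbdd (Set.mem_image_of_mem ψ hfirst)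
  rw [hzT1] at htel
  rw [Finset.sum_sub_distrib]
  linarith
end

section
/- For every u ∈ X, the optimistic mirror descent iterates satisfy Σ_{t=1}^T (ℓ_t(z_t) − ℓ_t(u)) ≤ D_ψ(u, z_0; φ_0) + Σ_{t=1}^T ⟨g_t − g̃_t, z_t − z_{t+1}⟩. -/
open scoped RealInnerProductSpace

/-- One step of optimistic mirror descent: the potential `D_ψ(u, z; φ) + ⟪gh, z - u⟫` pays for the
linearized regret `⟪g, z - u⟫` up to the hint error `⟪g - gh, z - z'⟫`. -/
theorem optimistic_md_step {E : Type*} [NormedAddCommGroup E] [InnerProductSpace ℝ E]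
    (ψ : E → ℝ) {z z' φ φ' g gh gh' : E} (u : E)
    (hφ' : φ' = φ - (g + gh' - gh)) (hφ : ψ z + ⟪φ, z' - z⟫ ≤ ψ z') :
    ⟪g, z - u⟫ + (ψ u - ψ z' - ⟪φ', u - z'⟫ + ⟪gh', z' - u⟫)
      ≤ ψ u - ψ z - ⟪φ, u - z⟫ + ⟪gh, z - u⟫ + ⟪g - gh, z - z'⟫ := by
  subst hφ'
  simp only [inner_sub_left, inner_sub_right, inner_add_left] at *
  linarith

/-- Regret bound for optimistic mirror descent with a (possibly non-differentiable,
non-strongly convex) regularizer. The Bregman divergence with specified subgradient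
is `D_ψ(x, y; φ) = ψ x - ψ y - ⟪φ, x - y⟫`. -/
theorem optimistic_md_regret
    {E : Type*} [NormedAddCommGroup E] [InnerProductSpace ℝ E] [FiniteDimensional ℝ E]
    (X : Set E) (hXclosed : IsClosed X) (hXconv : Convex ℝ X)
    (T : ℕ)
    (ψ : E → ℝ) (l : ℕ → E → ℝ)
    (hψconv : ConvexOn ℝ X ψ) (hlconv : ∀ t, ConvexOn ℝ X (l t))
    (z φ g gh : ℕ → E)
    (hz0 : z 0 ∈ X)
    (hg0 : g 0 = 0) (hgh0 : gh 0 = 0) (hghT1 : gh (T + 1) = 0)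
    (hφ0 : ∀ w ∈ X, ψ (z 0) + ⟪φ 0, w - z 0⟫ ≤ ψ w)
    (hφrec : ∀ t ∈ Finset.Icc 1 (T + 1),
      φ t = φ (t - 1) - (g (t - 1) + gh t - gh (t - 1)))
    (hφsub : ∀ t ∈ Finset.Icc 1 (T + 1), ∀ w ∈ X, ψ (z t) + ⟪φ t, w - z t⟫ ≤ ψ w)
    (hzmin : ∀ t ∈ Finset.Icc 1 (T + 1), z t ∈ X ∧ ∀ w ∈ X,
      ⟪g (t - 1) + gh t - gh (t - 1), z t⟫
          + (ψ (z t) - ψ (z (t - 1)) - ⟪φ (t - 1), z t - z (t - 1)⟫)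
        ≤ ⟪g (t - 1) + gh t - gh (t - 1), w⟫
          + (ψ w - ψ (z (t - 1)) - ⟪φ (t - 1), w - z (t - 1)⟫))
    (hgsub : ∀ t ∈ Finset.Icc 1 T, ∀ w ∈ X, l t (z t) + ⟪g t, w - z t⟫ ≤ l t w) :
    ∀ u ∈ X,
      ∑ t ∈ Finset.Icc 1 T, (l t (z t) - l t u)
        ≤ (ψ u - ψ (z 0) - ⟪φ 0, u - z 0⟫)
          + ∑ t ∈ Finset.Icc 1 T, ⟪g t - gh t, z t - z (t + 1)⟫ := by
  intro u hu
  have hsub : ∀ t ≤ T + 1, ∀ w ∈ X, ψ (z t) + ⟪φ t, w - z t⟫ ≤ ψ w := by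
    intro t ht
    rcases Nat.eq_zero_or_pos t with rfl | hpos
    · exact hφ0
    · exact hφsub t (Finset.mem_Icc.2 ⟨hpos, ht⟩)
  have hstep (t : ℕ) (ht : t ≤ T) := by
    have hmem : t + 1 ∈ Finset.Icc 1 (T + 1) := Finset.mem_Icc.2 ⟨by lia, by lia⟩
    exact optimistic_md_step ψ u (hφrec (t + 1) hmem)
      (hsub t (by lia) (z (t + 1)) (hzmin (t + 1) hmem).1)
  simp only [Nat.add_sub_cancel] at hstep
  have hsum : ∀ n ≤ T, ∑ t ∈ Finset.Icc 1 n, (l t (z t) - l t u)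
      + (ψ u - ψ (z (n + 1)) - ⟪φ (n + 1), u - z (n + 1)⟫ + ⟪gh (n + 1), z (n + 1) - u⟫)
        ≤ (ψ u - ψ (z 0) - ⟪φ 0, u - z 0⟫)
          + ∑ t ∈ Finset.Icc 1 n, ⟪g t - gh t, z t - z (t + 1)⟫ := by
    intro n
    induction n with
    | zero =>
      intro _
      simpa [hg0, hgh0] using hstep 0 (Nat.zero_le T)
    | succ n ih =>
      intro hn
      rw [Finset.sum_Icc_succ_top (by lia), Finset.sum_Icc_succ_top (by lia)]
      have hloss := hgsub (n + 1) (Finset.mem_Icc.2 ⟨by lia, hn⟩) u hu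
      rw [← neg_sub (z (n + 1)) u, inner_neg_right] at hloss
      linarith [ih (by lia), hstep (n + 1) hn]
  have hT := hsum T le_rfl
  rw [hghT1, inner_zero_left] at hT
  linarith [hsub (T + 1) le_rfl u hu]
end

section
/- For every t ≥ 0 (with the convention A_{−1}G_{−1} := 0), the generalized Frank-Wolfe iterates satisfy the per-iteration primal-dual bound A_t G_t − A_{t−1} G_{t−1} ≤ (L a_t²/(2A_t))·‖v_t − x_t‖². -/
open scoped RealInnerProductSpace

/-- One averaging step `x⁺ = (B x + a v) / (B + a)` on a composite objective `f + ψ`, with `f`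
satisfying the quadratic upper bound at `x` with gradient `g`. -/
theorem composite_averaging_step_le
    {E : Type*} [NormedAddCommGroup E] [InnerProductSpace ℝ E]
    {C : Set E} {ψ f : E → ℝ} (hψ : ConvexOn ℝ C ψ) {L : ℝ} {g x v : E}
    (hf : ∀ y ∈ C, f y - f x - ⟪g, y - x⟫ ≤ L / 2 * ‖x - y‖ ^ 2)
    (hx : x ∈ C) (hv : v ∈ C) {a B : ℝ} (ha : 0 < a) (hB : 0 ≤ B) {y : E}
    (hy : y = (B / (B + a)) • x + (a / (B + a)) • v) :
    (B + a) * (f y + ψ y) - B * (f x + ψ x) - a * (f x + ⟪g, v - x⟫ + ψ v)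
      ≤ L * a ^ 2 / (2 * (B + a)) * ‖v - x‖ ^ 2 := by
  have hS : 0 < B + a := by positivity
  have hsum : B / (B + a) + a / (B + a) = 1 := by field_simp
  have hyC : y ∈ C := hy ▸ hψ.1 hx hv (by positivity) (by positivity) hsum
  have hψy : ψ y ≤ B / (B + a) * ψ x + a / (B + a) * ψ v := by
    simpa [hy] using hψ.2 hx hv (by positivity) (by positivity) hsum
  have hdiff : y - x = (a / (B + a)) • (v - x) := by
    rw [hy, eq_sub_iff_add_eq.mpr hsum]
    module
  have hfy := hf y hyC
  rw [norm_sub_rev, hdiff, inner_smul_right, norm_smul, mul_pow, Real.norm_eq_abs, sq_abs] at hfy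
  have hψS := mul_le_mul_of_nonneg_left hψy hS.le
  have hfS := mul_le_mul_of_nonneg_left hfy hS.le
  have eψ : (B + a) * (B / (B + a) * ψ x + a / (B + a) * ψ v) = B * ψ x + a * ψ v := by
    field_simp
  have ef : (B + a) * (f y - f x - a / (B + a) * ⟪g, v - x⟫)
      = (B + a) * (f y - f x) - a * ⟪g, v - x⟫ := by
    field_simp
  have eL : (B + a) * (L / 2 * ((a / (B + a)) ^ 2 * ‖v - x‖ ^ 2))
      = L * a ^ 2 / (2 * (B + a)) * ‖v - x‖ ^ 2 := by
    field_simp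
  linarith

/-- Per-iteration primal-dual bound for generalized Frank-Wolfe:
`A_t G_t - A_{t-1} G_{t-1} ≤ (L a_t²/(2A_t))·‖v_t - x_t‖²`, with the convention
`A_{-1} G_{-1} = 0`. Here `C` is the effective domain of the convex, proper,
lower semi-continuous regularizer `ψ`. -/
theorem generalized_fw_per_iteration_bound
    {E : Type*} [NormedAddCommGroup E] [InnerProductSpace ℝ E] [FiniteDimensional ℝ E]
    (C : Set E) (hCne : C.Nonempty) (hCconv : Convex ℝ C)
    (ψ : E → ℝ) (hψconv : ConvexOn ℝ C ψ)
    (U : Set E) (hUopen : IsOpen U) (hCU : C ⊆ U)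
    (f : E → ℝ) (f' : E → E) (L : ℝ)
    (hgrad : ∀ z ∈ U, HasGradientAt f (f' z) z)
    (hsmooth : ∀ x ∈ U, ∀ y ∈ U,
      0 ≤ f y - f x - ⟪f' x, y - x⟫ ∧
        f y - f x - ⟪f' x, y - x⟫ ≤ L / 2 * ‖x - y‖ ^ 2)
    (a A : ℕ → ℝ) (hapos : ∀ t, 0 < a t)
    (hA : ∀ t, A t = ∑ ℓ ∈ Finset.range (t + 1), a ℓ)
    (x v : ℕ → E) (hx0 : x 0 ∈ C)
    (hv : ∀ t, v t ∈ C ∧ ∀ w ∈ C, ⟪f' (x t), v t⟫ + ψ (v t) ≤ ⟪f' (x t), w⟫ + ψ w)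
    (hx1 : x 1 = v 0)
    (hxrec : ∀ t, 1 ≤ t →
      x (t + 1) = (A (t - 1) / A t) • x t + (a t / A t) • v t)
    (G : ℕ → ℝ)
    (hG : ∀ t, G t = f (x (t + 1)) + ψ (x (t + 1)) -
      (1 / A t) * ∑ ℓ ∈ Finset.range (t + 1),
        a ℓ * (f (x ℓ) + ⟪f' (x ℓ), v ℓ - x ℓ⟫ + ψ (v ℓ))) :
    ∀ t : ℕ,
      A t * G t - (if t = 0 then 0 else A (t - 1) * G (t - 1))
        ≤ L * a t ^ 2 / (2 * A t) * ‖v t - x t‖ ^ 2 := by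
  have hA_zero : A 0 = a 0 := by simp [hA]
  have hA_succ : ∀ n, A (n + 1) = A n + a (n + 1) := fun n => by
    rw [hA, hA n, Finset.sum_range_succ _ (n + 1)]
  have hApos : ∀ n, 0 < A n := fun n => by
    rw [hA]
    exact Finset.sum_pos (fun i _ => hapos i) (by simp)
  have hxC : ∀ n, x n ∈ C := by
    intro n
    induction n with
    | zero => exact hx0
    | succ n ih =>
      rcases n with _ | n
      · simpa [hx1] using (hv 0).1
      · rw [hxrec (n + 1) (by omega), Nat.add_sub_cancel]
        refine hCconv ih (hv _).1 (div_nonneg (hApos _).le (hApos _).le)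
          (div_nonneg (hapos _).le (hApos _).le) ?_
        rw [← add_div, ← hA_succ, div_self (hApos _).ne']
  have hAG : ∀ n, A n * G n = A n * (f (x (n + 1)) + ψ (x (n + 1))) -
      ∑ ℓ ∈ Finset.range (n + 1), a ℓ * (f (x ℓ) + ⟪f' (x ℓ), v ℓ - x ℓ⟫ + ψ (v ℓ)) :=
    fun n => by
      rw [hG, mul_sub, ← mul_assoc, mul_one_div_cancel (hApos n).ne', one_mul]
  have hf : ∀ n, ∀ y ∈ C,
      f y - f (x n) - ⟪f' (x n), y - x n⟫ ≤ L / 2 * ‖x n - y‖ ^ 2 :=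
    fun n y hy => (hsmooth _ (hCU (hxC n)) y (hCU hy)).2
  intro t
  rcases t with _ | n
  · have h := composite_averaging_step_le hψconv (hf 0) (hxC 0) (hv 0).1 (hapos 0) le_rfl
      (y := x 1) (by simp [hx1, (hapos 0).ne'])
    rw [hAG]
    simpa [hA_zero] using h
  · have h := composite_averaging_step_le hψconv (hf (n + 1)) (hxC (n + 1)) (hv (n + 1)).1
      (hapos (n + 1)) (hApos n).le (y := x (n + 1 + 1))
      (by rw [hxrec (n + 1) (by omega), Nat.add_sub_cancel, hA_succ])
    rw [← hA_succ] at h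
    rw [if_neg n.succ_ne_zero, Nat.add_sub_cancel, hAG, hAG, Finset.sum_range_succ _ (n + 1)]
    linarith
end

section
/- For every t ≥ 1 and every u ∈ X, the anytime online-to-batch coupling satisfies A_t·(f(x_t) − f(u)) ≤ Σ_{i=1}^t a_i⟨∇f(x_i), v_i − u⟩; that is, the suboptimality of the averaged iterate x_t is bounded by the regret of the played points v_i against the linear losses a_i⟨∇f(x_i), ·⟩, divided by A_t. -/
open scoped RealInnerProductSpace

/-- The first-order (gradient) inequality for a convex function. -/
theorem ConvexOn.sub_le_inner_of_hasGradientAt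
    {E : Type*} [NormedAddCommGroup E] [InnerProductSpace ℝ E] [CompleteSpace E]
    {s : Set E} {f : E → ℝ} {g z w : E} (hf : ConvexOn ℝ s f) (hz : z ∈ s) (hw : w ∈ s)
    (hg : HasGradientAt f g z) : f z - f w ≤ ⟪g, z - w⟫ := by
  have hline : ConvexOn ℝ (AffineMap.lineMap z w ⁻¹' s) (f ∘ AffineMap.lineMap (k := ℝ) z w) :=
    hf.comp_affineMap _
  have hderiv : HasDerivAt (f ∘ AffineMap.lineMap (k := ℝ) z w) ⟪g, w - z⟫ 0 := by
    have hfd := hg.hasFDerivAt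
    rw [← AffineMap.lineMap_apply_zero (k := ℝ) z w] at hfd
    simpa using hfd.comp_hasDerivAt (0 : ℝ) AffineMap.hasDerivAt_lineMap
  have hslope := hline.le_slope_of_hasDerivAt (x := 0) (y := 1) (by simpa) (by simpa)
    one_pos hderiv
  rw [← neg_sub w z, inner_neg_right]
  simp [slope_def_field] at hslope
  linarith

/-- Anytime online-to-batch coupling: the weighted suboptimality of the averaged
iterate `x_t` is bounded by the regret of the played points `v_i` against the
linear losses `a_i⟪∇f(x_i), ·⟫`. -/
theorem anytime_online_to_batch
    {E : Type*} [NormedAddCommGroup E] [InnerProductSpace ℝ E] [FiniteDimensional ℝ E]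
    (X : Set E) (hXconv : Convex ℝ X)
    (U : Set E) (hUopen : IsOpen U) (hXU : X ⊆ U)
    (f : E → ℝ) (f' : E → E)
    (hfconv : ConvexOn ℝ X f)
    (hgrad : ∀ z ∈ U, HasGradientAt f (f' z) z)
    (a A : ℕ → ℝ) (hapos : ∀ t, 1 ≤ t → 0 < a t)
    (hA : ∀ t, A t = ∑ i ∈ Finset.Icc 1 t, a i)
    (v x y : ℕ → E) (hv : ∀ t, 1 ≤ t → v t ∈ X)
    (hx1 : x 1 = v 1)
    (hy : ∀ t, 1 ≤ t → y t ∈ X ∧ f (y t) ≤ f (x t))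
    (hxrec : ∀ t, 2 ≤ t →
      x t = (A (t - 1) / A t) • y (t - 1) + (a t / A t) • v t) :
    ∀ t, 1 ≤ t → ∀ u ∈ X,
      A t * (f (x t) - f u) ≤ ∑ i ∈ Finset.Icc 1 t, a i * ⟪f' (x i), v i - u⟫ := by
  have hsucc (t : ℕ) : A (t + 1) = A t + a (t + 1) := by
    rw [hA, hA, Finset.sum_Icc_succ_top (by omega)]
  have hApos (t : ℕ) (ht : 1 ≤ t) : 0 < A t := by
    rw [hA]
    exact Finset.sum_pos (fun i hi => hapos i (Finset.mem_Icc.mp hi).1) ⟨1, by simpa⟩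
  intro t ht u hu
  induction t, ht using Nat.le_induction with
  | base =>
    have hv1 := hv 1 le_rfl
    have hgrad1 := hfconv.sub_le_inner_of_hasGradientAt hv1 hu (hgrad _ (hXU hv1))
    simpa [hA, hx1] using mul_le_mul_of_nonneg_left hgrad1 (hapos 1 le_rfl).le
  | succ t ht ih =>
    have hAt := hApos t ht
    have hAt' := hApos (t + 1) (by omega)
    have hat := hapos (t + 1) (by omega)
    obtain ⟨hyX, hyx⟩ := hy t ht
    have hrec := hxrec (t + 1) (by omega)
    rw [Nat.add_sub_cancel] at hrec
    have hxX : x (t + 1) ∈ X := by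
      rw [hrec]
      refine hXconv hyX (hv _ (by omega)) (by positivity) (by positivity) ?_
      rw [← add_div, ← hsucc, div_self hAt'.ne']
    have hgradx := hgrad _ (hXU hxX)
    have hu_le := mul_le_mul_of_nonneg_left
      (hfconv.sub_le_inner_of_hasGradientAt hxX hu hgradx) hat.le
    have hy_le := mul_le_mul_of_nonneg_left
      (hfconv.sub_le_inner_of_hasGradientAt hxX hyX hgradx) hAt.le
    have hyx_le := mul_le_mul_of_nonneg_left hyx hAt.le
    have hscaled : A (t + 1) • x (t + 1) = A t • y t + a (t + 1) • v (t + 1) := by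
      rw [hrec, smul_add, smul_smul, smul_smul, mul_div_cancel₀ _ hAt'.ne',
        mul_div_cancel₀ _ hAt'.ne']
    have hinner := congrArg (fun z => ⟪f' (x (t + 1)), z⟫) hscaled
    simp only [inner_add_right, real_inner_smul_right] at hinner
    rw [Finset.sum_Icc_succ_top (by omega)]
    rw [hsucc] at hinner ⊢
    simp only [inner_sub_right] at hu_le hy_le ih ⊢
    linarith
end

section
/- Suppose f satisfies the (M,1)-strong growth property along the iterates: D_f(x_{t+1}, x_t) ≤ (1/(2M))·⟨∇f(x_t), x_t − v_t⟩ for all t, where D_f(y, x) := f(y) − f(x) − ⟨∇f(x), y − x⟩. Then for every t ≥ 1 the primal-dual gap contracts linearly: A_t G_t ≤ A_{t−1} G_{t−1}, i.e., G_t ≤ (1 − 1/(2M))·G_{t−1}. -/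
open scoped RealInnerProductSpace

/-- Frank-Wolfe with modified linear coupling `γ_t = 2a_t/A_t = 1/M` under the
`(M,1)`-strong growth property: the primal-dual gap contracts linearly,
`A_t G_t ≤ A_{t-1} G_{t-1}`, i.e. `G_t ≤ (1 - 1/(2M)) G_{t-1}`. -/
theorem fw_strong_growth_linear_contraction
    {E : Type*} [NormedAddCommGroup E] [InnerProductSpace ℝ E] [FiniteDimensional ℝ E]
    (X : Set E) (hXcompact : IsCompact X) (hXconv : Convex ℝ X)
    (U : Set E) (hUopen : IsOpen U) (hXU : X ⊆ U)
    (f : E → ℝ) (f' : E → E)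
    (hfconv : ConvexOn ℝ X f)
    (hgrad : ∀ z ∈ U, HasGradientAt f (f' z) z)
    (M : ℝ) (hM : 1 ≤ M)
    (a A : ℕ → ℝ) (hapos : ∀ t, 0 < a t)
    (hA : ∀ t, A t = ∑ ℓ ∈ Finset.range (t + 1), a ℓ)
    (hratio : ∀ t, 1 ≤ t → a t / A t = 1 / (2 * M))
    (x v : ℕ → E) (hx0 : x 0 ∈ X)
    (hv : ∀ t, v t ∈ X ∧ ∀ w ∈ X, ⟪f' (x t), v t⟫ ≤ ⟪f' (x t), w⟫)
    (hxrec : ∀ t, x (t + 1) = (1 - 1 / M) • x t + (1 / M) • v t)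
    (hgrowth : ∀ t,
      f (x (t + 1)) - f (x t) - ⟪f' (x t), x (t + 1) - x t⟫
        ≤ (1 / (2 * M)) * ⟪f' (x t), x t - v t⟫)
    (G : ℕ → ℝ)
    (hG : ∀ t, G t = f (x (t + 1)) -
      (1 / A t) * ∑ ℓ ∈ Finset.range (t + 1),
        a ℓ * (f (x ℓ) + ⟪f' (x ℓ), v ℓ - x ℓ⟫)) :
    ∀ t, 1 ≤ t →
      A t * G t ≤ A (t - 1) * G (t - 1) ∧ G t ≤ (1 - 1 / (2 * M)) * G (t - 1) := by
  rintro (_ | s) ht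
  · omega
  have hMpos : 0 < M := by linarith
  have hApos : ∀ t, 0 < A t := fun t => by
    rw [hA t]
    exact Finset.sum_pos (fun ℓ _ => hapos ℓ) ⟨0, by simp⟩
  have hAsucc : A (s + 1) = A s + a (s + 1) := by
    rw [hA, hA, Finset.sum_range_succ]
  have ha : a (s + 1) = 1 / (2 * M) * A (s + 1) :=
    (div_eq_iff (hApos _).ne').mp (hratio (s + 1) ht)
  have hAG : ∀ t, A t * G t = A t * f (x (t + 1)) -
      ∑ ℓ ∈ Finset.range (t + 1), a ℓ * (f (x ℓ) + ⟪f' (x ℓ), v ℓ - x ℓ⟫) := fun t => by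
    have hAt := (hApos t).ne'
    rw [hG t]
    field_simp
  have hstep : x (s + 1 + 1) - x (s + 1) = -((1 / M) • (x (s + 1) - v (s + 1))) := by
    rw [hxrec (s + 1)]
    module
  have hdescent : f (x (s + 1 + 1)) - f (x (s + 1)) ≤
      -(1 / (2 * M) * ⟪f' (x (s + 1)), x (s + 1) - v (s + 1)⟫) := by
    have h := hgrowth (s + 1)
    rw [hstep, inner_neg_right, real_inner_smul_right] at h
    have hhalf : 1 / M = 2 * (1 / (2 * M)) := by field_simp
    rw [hhalf] at h
    linarith
  have hmono : A (s + 1) * G (s + 1) ≤ A s * G s := by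
    have h := mul_le_mul_of_nonneg_left hdescent (hApos (s + 1)).le
    have hcoupling : A (s + 1) * -(1 / (2 * M) * ⟪f' (x (s + 1)), x (s + 1) - v (s + 1)⟫) =
        a (s + 1) * ⟪f' (x (s + 1)), v (s + 1) - x (s + 1)⟫ := by
      rw [← neg_sub (x (s + 1)) (v (s + 1)), inner_neg_right, ha]
      ring
    rw [hcoupling] at h
    have hA_s : A s = A (s + 1) - a (s + 1) := by linarith
    rw [hAG, hAG, Finset.sum_range_succ _ (s + 1), hA_s]
    linarith
  refine ⟨hmono, le_of_mul_le_mul_left ?_ (hApos (s + 1))⟩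
  have hA_s : A s = A (s + 1) * (1 - 1 / (2 * M)) := by linarith
  calc A (s + 1) * G (s + 1) ≤ A s * G s := hmono
    _ = A (s + 1) * ((1 - 1 / (2 * M)) * G s) := by rw [hA_s, mul_assoc]
end

section
/- Let f be μ-strongly convex (μ > 0) and differentiable on the compact convex set X ⊆ ℝ^d with Euclidean diameter D, let x* be the minimizer of f over X, and suppose the closed Euclidean ball of radius r > 0 around x* is contained in X. Then for every x ∈ X and every Frank-Wolfe vertex v ∈ argmin_{w∈X} ⟨∇f(x), w⟩ with v ≠ x, the primal gap is bounded as f(x) − f(x*) ≤ (D²/r²)·⟨∇f(x), x − v⟩²/(2μ‖x − v‖²). -/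
open scoped RealInnerProductSpace

section

variable {E : Type*} [NormedAddCommGroup E] [InnerProductSpace ℝ E]

/-- A minimizer `v` over `X` of the linear functional `⟪g, ·⟫` lies at least `r * ‖g‖` below the
centre of any closed ball of radius `r` contained in `X`. -/
theorem radius_mul_norm_le_inner_sub_of_closedBall_subset {X : Set E} {c g v : E} {r : ℝ}
    (hr : 0 ≤ r) (hball : Metric.closedBall c r ⊆ X) (hv : ∀ w ∈ X, ⟪g, v⟫ ≤ ⟪g, w⟫) :
    r * ‖g‖ ≤ ⟪g, c - v⟫ := by
  have hmem : c - (r / ‖g‖) • g ∈ X := by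
    apply hball
    rw [mem_closedBall_iff_norm, sub_sub_cancel_left, norm_neg, norm_smul, Real.norm_eq_abs,
      abs_of_nonneg (by positivity)]
    rcases eq_or_ne ‖g‖ 0 with h0 | h0
    · simpa [h0] using hr
    · exact (div_mul_cancel₀ r h0).le
  have h := hv _ hmem
  have hscale : r / ‖g‖ * ‖g‖ ^ 2 = r * ‖g‖ := by
    rcases eq_or_ne ‖g‖ 0 with h0 | h0
    · simp [h0]
    · field_simp
  rw [inner_sub_right, inner_smul_right, real_inner_self_eq_norm_sq, hscale] at h
  rw [inner_sub_right]
  linarith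

/-- Young's inequality for the inner product, with parameter `μ`. -/
theorem inner_sub_half_mul_norm_sq_le {μ : ℝ} (hμ : 0 < μ) (g u : E) :
    ⟪g, u⟫ - μ / 2 * ‖u‖ ^ 2 ≤ ‖g‖ ^ 2 / (2 * μ) := by
  rw [le_div_iff₀ (by positivity)]
  nlinarith [real_inner_le_norm g u, sq_nonneg (‖g‖ - μ * ‖u‖)]

end

/-- Primal gap bound for strongly convex `f` when the optimum lies in the relative
interior: combining the strong-convexity bound with the Guélat–Marcotte scaling
inequality, `f(x) - f(x*) ≤ (D²/r²)·⟪∇f(x), x - v⟫²/(2μ‖x - v‖²)` for every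
Frank-Wolfe vertex `v ≠ x`, where `D` is the Euclidean diameter of `X`. -/
theorem strongly_convex_interior_primal_gap_bound
    {d : ℕ}
    (X : Set (EuclideanSpace ℝ (Fin d))) (hXcompact : IsCompact X) (hXconv : Convex ℝ X)
    (f : EuclideanSpace ℝ (Fin d) → ℝ)
    (f' : EuclideanSpace ℝ (Fin d) → EuclideanSpace ℝ (Fin d))
    (hgrad : ∀ z ∈ X, HasGradientAt f (f' z) z)
    (μ : ℝ) (hμ : 0 < μ)
    (hstrong : ∀ x ∈ X, ∀ y ∈ X,
      f x + ⟪f' x, y - x⟫ + μ / 2 * ‖y - x‖ ^ 2 ≤ f y)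
    (xs : EuclideanSpace ℝ (Fin d)) (hxs : xs ∈ X) (hxsmin : ∀ z ∈ X, f xs ≤ f z)
    (r : ℝ) (hr : 0 < r) (hball : Metric.closedBall xs r ⊆ X) :
    ∀ x ∈ X, ∀ v ∈ X, (∀ w ∈ X, ⟪f' x, v⟫ ≤ ⟪f' x, w⟫) → v ≠ x →
      f x - f xs ≤ (Metric.diam X) ^ 2 / r ^ 2 *
        (⟪f' x, x - v⟫ ^ 2 / (2 * μ * ‖x - v‖ ^ 2)) := by
  intro x hx v hv hvmin hvx
  have hgap : f x - f xs ≤ ⟪f' x, x - xs⟫ - μ / 2 * ‖x - xs‖ ^ 2 := by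
    have h := hstrong x hx xs hxs
    rw [← neg_sub x xs, inner_neg_right, norm_neg] at h
    linarith
  have hinner : r * ‖f' x‖ ≤ ⟪f' x, x - v⟫ := by
    have h := radius_mul_norm_le_inner_sub_of_closedBall_subset hr.le hball hvmin
    have hnonneg : 0 ≤ ⟪f' x, x - xs⟫ := by
      have := hxsmin x hx
      have : 0 ≤ μ / 2 * ‖x - xs‖ ^ 2 := by positivity
      linarith
    rw [← sub_add_sub_cancel x xs v, inner_add_right]
    linarith
  have hdist : 0 < ‖x - v‖ := norm_pos_iff.mpr (sub_ne_zero.mpr hvx.symm)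
  have hdiam : ‖x - v‖ ≤ Metric.diam X := by
    rw [← dist_eq_norm]
    exact Metric.dist_le_diam_of_mem hXcompact.isBounded hx hv
  calc f x - f xs ≤ ‖f' x‖ ^ 2 / (2 * μ) :=
        hgap.trans (inner_sub_half_mul_norm_sq_le hμ _ _)
    _ = ‖x - v‖ ^ 2 / r ^ 2 * ((r * ‖f' x‖) ^ 2 / (2 * μ * ‖x - v‖ ^ 2)) := by
        field_simp
    _ ≤ (Metric.diam X) ^ 2 / r ^ 2 *
        (⟪f' x, x - v⟫ ^ 2 / (2 * μ * ‖x - v‖ ^ 2)) := by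
        gcongr
end
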